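/- Let Γ ≤ Δ be countable discrete groups with [Δ : Γ] = ∞. Suppose there exist a transversal T = {t_i : i ∈ ℕ} for the left cosets Δ/Γ and an element γ₀ ∈ core_Δ(Γ) such that the decreasing chain of normal subgroups of Γ given by Γ̄_k = ⟨⟨ t_i⁻¹γ₀t_i : i ≥ k ⟩⟩_Γ (the normal closure in Γ of {t_i⁻¹γ₀t_i : i ≥ k}) is not constant in k. Then there exists a family (θ_i)_{i∈I} of invariant random subgroups of Γ, indexed by a set I of cardinality continuum, such that the co-induced invariant random subgroups CIND_Γ^Δ(θ_i) of Δ are all non-atomic, weakly mixing, and pairwise distinct. -/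

import Mathlib

open MeasureTheory

namespace IRSPaper


/-! ## Basic setup: the space of subgroups, invariant random subgroups -/

/-- The conjugation action of a group on its space of subgroups: `g • H = gHg⁻¹`. -/
def conjSub {G : Type*} [Group G] (g : G) (H : Subgroup G) : Subgroup G :=
  Subgroup.map ((MulAut.conj g).toMonoidHom) H

/-- The topology on the space of subgroups of `G`, induced from the product topology
on `G → Bool` (i.e. the topology of `2^G`). -/
noncomputable instance instTopSub (G : Type*) [Group G] : TopologicalSpace (Subgroup G) :=
  TopologicalSpace.induced
    (fun (H : Subgroup G) (g : G) => @decide (g ∈ H) (Classical.dec _)) inferInstance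

/-- The Borel σ-algebra on the space of subgroups. -/
noncomputable instance instMeasSub (G : Type*) [Group G] : MeasurableSpace (Subgroup G) :=
  borel _

instance instBorelSub (G : Type*) [Group G] : BorelSpace (Subgroup G) := ⟨rfl⟩

/-- An invariant random subgroup: a Borel probability measure on `Sub(G)` which is invariant
under the conjugation action of `G`. -/
def IsIRS {G : Type*} [Group G] (θ : Measure (Subgroup G)) : Prop :=
  IsProbabilityMeasure θ ∧ ∀ g : G, Measure.map (conjSub g) θ = θ

/-- The basic set `N_F = {H ∈ Sub(G) : F ⊆ H}`. -/
def NSet {G : Type*} [Group G] (F : Set G) : Set (Subgroup G) :=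
  {H : Subgroup G | F ⊆ (H : Set G)}

/-- For `Γ ≤ Δ` and `S ⊆ Δ`, the set of subgroups of `Γ` containing every element of `Γ`
whose image in `Δ` lies in `S`.  When `S = t⁻¹Ft ⊆ Γ`, this is exactly the basic set
`N_{t⁻¹Ft}^Γ ⊆ Sub(Γ)`. -/
def NpullSet {Δ : Type*} [Group Δ] (Γ : Subgroup Δ) (S : Set Δ) : Set (Subgroup ↥Γ) :=
  {Λ : Subgroup ↥Γ | ∀ x : ↥Γ, (x : Δ) ∈ S → x ∈ Λ}

/-- `T` is a transversal for the left cosets `Δ/Γ`: each left coset `dΓ` contains exactly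
one element of `T`. -/
def IsLeftTransversal {Δ : Type*} [Group Δ] (Γ : Subgroup Δ) (T : Set Δ) : Prop :=
  ∀ d : Δ, ∃! t : Δ, t ∈ T ∧ d⁻¹ * t ∈ Γ

/-- The defining property of the co-induced invariant random subgroup
`ν = CIND_Γ^Δ(θ)` (with respect to the transversal `T`):  for every finite `F ⊆ Δ`,
`ν(N_F) = 0` if `F ⊄ core_Δ(Γ)` and `ν(N_F) = ∏_{t ∈ T} θ(N_{t⁻¹Ft}^Γ)` if `F ⊆ core_Δ(Γ)`. -/
def CindSpec {Δ : Type*} [Group Δ] (Γ : Subgroup Δ) (T : Set Δ)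
    (θ : Measure (Subgroup ↥Γ)) (ν : Measure (Subgroup Δ)) : Prop :=
  ∀ F : Finset Δ,
    (¬ (F : Set Δ) ⊆ (Γ.normalCore : Set Δ) → ν (NSet (F : Set Δ)) = 0) ∧
    ((F : Set Δ) ⊆ (Γ.normalCore : Set Δ) →
      ν (NSet (F : Set Δ)) =
        ∏' t : T, θ (NpullSet Γ ((fun d => (t : Δ)⁻¹ * d * (t : Δ)) '' (F : Set Δ))))

/-- Ergodicity of a (not necessarily probability-) measure-preserving action given by
an explicit family of maps: every invariant measurable set is null or conull. -/
def ErgodicAct {G α : Type*} [MeasurableSpace α] (act : G → α → α) (μ : Measure α) : Prop :=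
  ∀ s : Set α, MeasurableSet s → (∀ g : G, act g ⁻¹' s = s) → μ s = 0 ∨ μ sᶜ = 0

/-- Weak mixing of an action: the diagonal action on the square is ergodic. -/
def WeaklyMixingAct {G α : Type*} [MeasurableSpace α] (act : G → α → α) (μ : Measure α) : Prop :=
  ErgodicAct (fun (g : G) (p : α × α) => (act g p.1, act g p.2)) (μ.prod μ)

/-- A measure is non-atomic (has no atoms) if every singleton is null. -/
def NonAtomicMeasure {α : Type*} [MeasurableSpace α] (μ : Measure α) : Prop :=
  ∀ x : α, μ {x} = 0

/-- The kernel of an IRS `θ` of `Γ`: the set of `γ ∈ Γ` with `θ(N_γ) = 1`.  (For a probability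
measure this set is a subgroup; taking `Subgroup.closure` makes it a `Subgroup` on the nose.) -/
def kerIRS {Δ : Type*} [Group Δ] (Γ : Subgroup Δ) (θ : Measure (Subgroup ↥Γ)) : Subgroup ↥Γ :=
  Subgroup.closure {x : ↥Γ | θ {Λ : Subgroup ↥Γ | x ∈ Λ} = 1}

/-- `core_Δ(ker(θ))`, viewed as a subgroup of `Δ`. -/
def coreKer {Δ : Type*} [Group Δ] (Γ : Subgroup Δ) (θ : Measure (Subgroup ↥Γ)) : Subgroup Δ :=
  ((kerIRS Γ θ).map Γ.subtype).normalCore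


open scoped Pointwise in
/-- Neumann: if all orbits are infinite, finite sets can be moved off themselves. -/
lemma exists_smul_notMem {G J : Type*} [Group G] [MulAction G J]
    (hinf : ∀ j : J, (MulAction.orbit G j).Infinite) (F : Finset J) :
    ∃ g : G, ∀ a ∈ F, g • a ∉ F := by
  classical
  by_contra! hcon
  let s : Finset (J × J) := (F ×ˢ F).filter (fun p => ∃ g : G, g • p.1 = p.2)
  let c : J × J → G := fun p => if h : ∃ g : G, g • p.1 = p.2 then h.choose else 1
  have hc : ∀ p ∈ s, c p • p.1 = p.2 := by
    intro p hp
    have h := (Finset.mem_filter.1 hp).2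
    simp only [c, dif_pos h]
    exact h.choose_spec
  have hcov : ⋃ p ∈ s, c p • (MulAction.stabilizer G p.1 : Set G) = Set.univ := by
    rw [Set.eq_univ_iff_forall]
    intro g
    obtain ⟨a, ha, hga⟩ := hcon g
    have hp : (a, g • a) ∈ s := by
      simp only [s, Finset.mem_filter, Finset.mem_product]
      exact ⟨⟨ha, hga⟩, g, rfl⟩
    simp only [Set.mem_iUnion]
    refine ⟨(a, g • a), hp, ?_⟩
    rw [mem_leftCoset_iff]
    have := hc _ hp
    simp only [SetLike.mem_coe, MulAction.mem_stabilizer_iff, mul_smul, inv_smul_eq_iff]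
    exact this.symm
  obtain ⟨p, hp, hfi⟩ := Subgroup.exists_finiteIndex_of_leftCoset_cover hcov
  have : Finite (G ⧸ MulAction.stabilizer G p.1) := Subgroup.finite_quotient_of_finiteIndex
  have h2 : Finite (MulAction.orbit G p.1) :=
    Finite.of_equiv _ (MulAction.orbitEquivQuotientStabilizer G p.1).symm
  exact hinf p.1 (Set.toFinite _)


/-- Coordinate permutation preserves an i.i.d. product measure. -/
lemma mp_perm {J Y : Type*} [MeasurableSpace Y] (b : Measure Y) [IsProbabilityMeasure b]
    (e : J ≃ J) :
    MeasurePreserving (fun (x : J → Y) (j : J) => x (e j))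
      (Measure.infinitePi (fun _ : J => b)) (Measure.infinitePi (fun _ : J => b)) := by
  classical
  refine ⟨by fun_prop, ?_⟩
  refine Measure.eq_infinitePi _ fun s t ht => ?_
  rw [Measure.map_apply (by fun_prop) (.pi s.countable_toSet fun _ _ ↦ ht _)]
  have : (fun (x : J → Y) (j : J) => x (e j)) ⁻¹' ((s : Set J).pi t) =
      ((s.map e.toEmbedding : Finset J) : Set J).pi (fun i => t (e.symm i)) := by
    ext x
    simp only [Set.mem_preimage, Set.mem_pi, Finset.mem_coe, Finset.mem_map_equiv]
    constructor
    · intro h i hi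
      simpa using h _ hi
    · intro h i hi
      simpa using h (e i) (by simpa using hi)
  rw [this, Measure.infinitePi_pi _ (fun i _ => ht _)]
  simp

lemma indep_cyl {J Y : Type*} [MeasurableSpace Y] (b : Measure Y) [IsProbabilityMeasure b]
    (e : J ≃ J) (F : Finset J) (hF : ∀ a ∈ F, e a ∉ F) (S : Set (F → Y)) (hS : MeasurableSet S) :
    let m := Measure.infinitePi (fun _ : J => b)
    m (cylinder F S ∩ (fun (x : J → Y) (j : J) => x (e j)) ⁻¹' cylinder F S)
      = m (cylinder F S) * m (cylinder F S) := by
  classical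
  intro m
  have hind : ProbabilityTheory.iIndepFun (fun (j : J) (x : J → Y) => x j) m := by
    exact ProbabilityTheory.iIndepFun_infinitePi (X := fun _ y => y) (by fun_prop)
  have hd : Disjoint F (F.map e.toEmbedding) := by
    rw [Finset.disjoint_left]
    intro a ha hb
    obtain ⟨c, hc, rfl⟩ := Finset.mem_map.1 hb
    exact hF c hc ha
  have h1 := hind.indepFun_finset F (F.map e.toEmbedding) hd (by fun_prop)
  let ψ : (((F.map e.toEmbedding : Finset J) : Type _) → Y) → (F → Y) :=
    fun z a => z ⟨e a, Finset.mem_map_of_mem e.toEmbedding a.2⟩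
  have hψ : Measurable ψ := by fun_prop
  have h2 := h1.measure_inter_preimage_eq_mul S (ψ ⁻¹' S) hS (hψ hS)
  have h3 : (fun (x : J → Y) (j : J) => x (e j)) ⁻¹' cylinder F S =
     (fun (a : J → Y) (i : (F.map e.toEmbedding : Finset J)) => a i) ⁻¹' (ψ ⁻¹' S) := rfl
  have h4 := (mp_perm b e).measure_preimage (hS.cylinder F).nullMeasurableSet
  rw [h3] at h4 ⊢
  refine h2.trans ?_
  exact congrArg₂ _ rfl h4

/-- Generalized Bernoulli shifts with infinite orbits are ergodic. -/
lemma bernoulli_ergodic {G J Y : Type*} [Group G] [MulAction G J] [MeasurableSpace Y]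
    (b : Measure Y) [IsProbabilityMeasure b]
    (hinf : ∀ j : J, (MulAction.orbit G j).Infinite) (s : Set (J → Y)) (hs : MeasurableSet s)
    (hinv : ∀ g : G, (fun (x : J → Y) (j : J) => x (g • j)) ⁻¹' s = s) :
    Measure.infinitePi (fun _ : J => b) s = 0 ∨ Measure.infinitePi (fun _ : J => b) sᶜ = 0 := by
  classical
  set m := Measure.infinitePi (fun _ : J => b) with hm
  have key : ∀ ε : ℝ, 0 < ε → |m.real s ^ 2 - m.real s| ≤ 4 * ε := by
    intro ε hε
    obtain ⟨u, hu, hus⟩ := exists_measure_symmDiff_lt_of_generateFrom_isSetRing (μ := m)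
      (C := measurableCylinders (fun _ : J => Y))
      (isSetRing_measurableCylinders (α := fun _ : J => Y))
      ⟨{Set.univ}, Set.countable_singleton _, by
        simpa using univ_mem_measurableCylinders (fun _ : J => Y), by simp⟩
      (generateFrom_measurableCylinders).symm hs (ENNReal.ofReal_pos.2 hε)
    obtain ⟨F, S, hS, rfl⟩ := (mem_measurableCylinders _).1 hu
    obtain ⟨g, hg⟩ := exists_smul_notMem hinf F
    let e : J ≃ J := MulAction.toPerm g
    set T := (fun (x : J → Y) (j : J) => x (e j)) with hT
    set u := cylinder (α := fun _ : J => Y) F S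
    have hum : MeasurableSet u := hS.cylinder F
    have hmp := mp_perm b e
    have hi : m.real (u ∩ T ⁻¹' u) = m.real u * m.real u := by
      have := indep_cyl b e F hg S hS
      simp only [Measure.real]
      rw [← ENNReal.toReal_mul]
      exact congrArg ENNReal.toReal this
    have hTs : T ⁻¹' s = s := hinv g
    have h1 : m.real (symmDiff u s) ≤ ε := by
      exact ENNReal.toReal_le_of_le_ofReal hε.le hus.le
    have h2 : m.real (symmDiff (T ⁻¹' u) s) ≤ ε := by
      have : symmDiff (T ⁻¹' u) s = T ⁻¹' (symmDiff u s) := by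
        rw [Set.preimage_symmDiff, hTs]
      rw [this]
      refine le_trans (le_of_eq ?_) h1
      exact congrArg ENNReal.toReal (hmp.measure_preimage (hum.symmDiff hs).nullMeasurableSet)
    have h3 : |m.real u - m.real s| ≤ ε :=
      (abs_measureReal_sub_le_measureReal_symmDiff hum.nullMeasurableSet
        hs.nullMeasurableSet).trans h1
    have h4 : |m.real (u ∩ T ⁻¹' u) - m.real s| ≤ 2 * ε := by
      refine (abs_measureReal_sub_le_measureReal_symmDiff
        (hum.inter (hmp.measurable hum)).nullMeasurableSet hs.nullMeasurableSet).trans ?_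
      have hsub : symmDiff (u ∩ T ⁻¹' u) s ⊆ symmDiff u s ∪ symmDiff (T ⁻¹' u) s := by
        intro x
        simp only [Set.mem_symmDiff, Set.mem_inter_iff, Set.mem_union]
        tauto
      have := (measureReal_mono hsub (μ := m)).trans (measureReal_union_le _ _)
      linarith
    rw [hi] at h4
    have a1 : m.real u ≤ 1 := measureReal_le_one
    have a2 : m.real s ≤ 1 := measureReal_le_one
    have a3 : 0 ≤ m.real u := measureReal_nonneg
    have a4 : 0 ≤ m.real s := measureReal_nonneg
    rw [abs_le] at *
    constructor <;> nlinarith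
  have h0 : m.real s ^ 2 - m.real s = 0 := by
    rw [← abs_nonpos_iff]
    refine le_of_forall_pos_le_add fun ε hε => ?_
    have := key (ε / 4) (by positivity)
    linarith
  have h1 : m.real s * (m.real s - 1) = 0 := by linarith
  rcases mul_eq_zero.1 h1 with h | h
  · left
    simpa [Measure.real, ENNReal.toReal_eq_zero_iff] using h
  · right
    rw [prob_compl_eq_zero_iff hs]
    have : m.real s = 1 := by linarith
    simpa [Measure.real, ENNReal.toReal_eq_one_iff] using this

/-- The product of two i.i.d. measures is an i.i.d. measure on the sum of the index sets. -/
lemma mp_sum {I J Y : Type*} [MeasurableSpace Y] (b : Measure Y) [IsProbabilityMeasure b] :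
    MeasurePreserving (fun (x : I ⊕ J → Y) => (fun i => x (Sum.inl i), fun j => x (Sum.inr j)))
      (Measure.infinitePi (fun _ : I ⊕ J => b))
      ((Measure.infinitePi (fun _ : I => b)).prod (Measure.infinitePi (fun _ : J => b))) := by
  classical
  have h : MeasurePreserving (fun (p : (I → Y) × (J → Y)) (k : I ⊕ J) => Sum.elim p.1 p.2 k)
      ((Measure.infinitePi (fun _ : I => b)).prod (Measure.infinitePi (fun _ : J => b)))
      (Measure.infinitePi (fun _ : I ⊕ J => b)) := by
    have hme : Measurable (fun (p : (I → Y) × (J → Y)) (k : I ⊕ J) => Sum.elim p.1 p.2 k) := by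
      rw [measurable_pi_iff]
      rintro (i | j)
      · simp only [Sum.elim_inl]; fun_prop
      · simp only [Sum.elim_inr]; fun_prop
    refine ⟨hme, ?_⟩
    refine Measure.eq_infinitePi _ fun s t ht => ?_
    rw [Measure.map_apply hme (.pi s.countable_toSet fun _ _ ↦ ht _)]
    have : (fun (p : (I → Y) × (J → Y)) (k : I ⊕ J) => Sum.elim p.1 p.2 k) ⁻¹'
        ((s : Set (I ⊕ J)).pi t) =
        ((s.toLeft : Set I).pi (fun i => t (Sum.inl i))) ×ˢ
        ((s.toRight : Set J).pi (fun i => t (Sum.inr i))) := by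
      ext x; simp [Set.mem_pi]
    rw [this, Measure.prod_prod, Measure.infinitePi_pi _ (fun i _ => ht _),
      Measure.infinitePi_pi _ (fun i _ => ht _)]
    conv_rhs => rw [← Finset.toLeft_disjSum_toRight (u := s)]
    rw [Finset.prod_disjSum]
  refine ⟨by fun_prop, ?_⟩
  rw [← h.map_eq, Measure.map_map (by fun_prop) h.measurable]
  convert Measure.map_id
  rfl

lemma measurable_to_sub {α G : Type*} [MeasurableSpace α] [Group G] [Countable G]
    (f : α → Subgroup G) (h : ∀ g : G, MeasurableSet {a | g ∈ f a}) : Measurable f := by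
  classical
  have hb : instMeasSub G = MeasurableSpace.comap
      (fun (H : Subgroup G) (g : G) => @decide (g ∈ H) (Classical.dec _)) inferInstance := by
    show @borel _ (instTopSub G) = _
    unfold instTopSub
    rw [borel_comap, (BorelSpace.measurable_eq (α := G → Bool)).symm]
  rw [hb, measurable_comap_iff, measurable_pi_iff]
  intro g
  refine measurable_to_bool ?_
  convert h g using 1
  ext a
  simp

lemma measurableSet_mem {G : Type*} [Group G] (g : G) :
    MeasurableSet {H : Subgroup G | g ∈ H} := by
  classical
  have hc : Continuous (fun (H : Subgroup G) => @decide (g ∈ H) (Classical.dec _)) :=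
    (continuous_apply g).comp (continuous_induced_dom
      (f := fun (H : Subgroup G) (g : G) => @decide (g ∈ H) (Classical.dec _)))
  have := hc.measurable (measurableSet_singleton true)
  convert this using 1
  ext a
  simp

lemma mem_conjSub {G : Type*} [Group G] (g x : G) (H : Subgroup G) :
    x ∈ conjSub g H ↔ g⁻¹ * x * g ∈ H := by
  unfold conjSub
  rw [Subgroup.mem_map]
  constructor
  · rintro ⟨y, hy, rfl⟩
    simpa [mul_assoc] using hy
  · intro h
    exact ⟨_, h, by simp [mul_assoc]⟩

lemma measurable_conjSub {G : Type*} [Group G] [Countable G] (g : G) :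
    Measurable (conjSub g) := by
  refine measurable_to_sub _ fun x => ?_
  simp only [mem_conjSub]
  exact measurableSet_mem _

lemma measurableSet_NSet {G : Type*} [Group G] [Countable G] (F : Set G) :
    MeasurableSet (NSet F) := by
  have : NSet F = ⋂ g ∈ F, {H : Subgroup G | g ∈ H} := by
    ext H; simp [NSet, Set.subset_def]
  rw [this]
  exact .biInter F.to_countable fun g _ => measurableSet_mem g

/-- The random subgroup attached to a random set of cosets. -/
def phi {Δ : Type*} [Group Δ] (Γ : Subgroup Δ) (N : Subgroup Γ) (A : Δ ⧸ Γ → Bool) :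
    Subgroup Δ where
  carrier := {g | g ∈ Γ.normalCore ∧
    ∀ d : Δ, A (QuotientGroup.mk d) = true → d⁻¹ * g * d ∈ N.map Γ.subtype}
  one_mem' := ⟨one_mem _, fun d _ => by simp⟩
  mul_mem' := by
    rintro a b ⟨ha, ha'⟩ ⟨hb, hb'⟩
    refine ⟨mul_mem ha hb, fun d hd => ?_⟩
    have := mul_mem (ha' d hd) (hb' d hd)
    simpa [mul_assoc] using this
  inv_mem' := by
    rintro a ⟨ha, ha'⟩
    refine ⟨inv_mem ha, fun d hd => ?_⟩
    have := inv_mem (ha' d hd)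
    simpa [mul_assoc] using this

lemma mem_phi {Δ : Type*} [Group Δ] (Γ : Subgroup Δ) (N : Subgroup Γ) (A : Δ ⧸ Γ → Bool) (g : Δ) :
    g ∈ phi Γ N A ↔ g ∈ Γ.normalCore ∧
    ∀ d : Δ, A (QuotientGroup.mk d) = true → d⁻¹ * g * d ∈ N.map Γ.subtype := Iff.rfl

lemma measurable_phi {Δ : Type*} [Group Δ] [Countable Δ] (Γ : Subgroup Δ) (N : Subgroup Γ) :
    Measurable (phi Γ N) := by
  refine measurable_to_sub _ fun g => ?_
  simp only [mem_phi]
  have he : {A : Δ ⧸ Γ → Bool | g ∈ Γ.normalCore ∧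
      ∀ d : Δ, A (QuotientGroup.mk d) = true → d⁻¹ * g * d ∈ N.map Γ.subtype} =
      {A | g ∈ Γ.normalCore} ∩ ⋂ d : Δ, {A : Δ ⧸ Γ → Bool |
        A (QuotientGroup.mk d) = true → d⁻¹ * g * d ∈ N.map Γ.subtype} := by
    ext A
    simp
  rw [he]
  refine (MeasurableSet.const _).inter (.iInter fun d => ?_)
  have hm : Measurable fun A : Δ ⧸ Γ → Bool => A (QuotientGroup.mk d) := by fun_prop
  by_cases h : d⁻¹ * g * d ∈ N.map Γ.subtype
  · simp [h]
  · simp only [h, imp_false]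
    exact (hm (measurableSet_singleton true)).compl

lemma phi_equivariant {Δ : Type*} [Group Δ] (Γ : Subgroup Δ) (N : Subgroup Γ) (A : Δ ⧸ Γ → Bool)
    (h : Δ) : conjSub h (phi Γ N A) = phi Γ N (fun q => A (h⁻¹ • q)) := by
  ext x
  rw [mem_conjSub, mem_phi, mem_phi]
  refine and_congr ?_ ?_
  · constructor
    · intro hx
      have := Γ.normalCore_normal.conj_mem _ hx h
      simpa [mul_assoc] using this
    · intro hx
      have := Γ.normalCore_normal.conj_mem _ hx h⁻¹
      simpa [mul_assoc] using this
  · constructor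
    · intro H d hd
      have := H (h⁻¹ * d) hd
      simpa [mul_assoc] using this
    · intro H d hd
      have := H (h * d) (by
        have : (h⁻¹ • (QuotientGroup.mk (h * d) : Δ ⧸ Γ)) = QuotientGroup.mk d := by
          rw [MulAction.Quotient.smul_mk]; simp
        rw [this]; exact hd)
      simpa [mul_assoc] using this

/-- The coin measure. -/
noncomputable def coin (p : ℝ) : Measure Bool :=
  ENNReal.ofReal (1 - p) • Measure.dirac true + ENNReal.ofReal p • Measure.dirac false

lemma coin_prob {p : ℝ} (h0 : 0 < p) (h1 : p < 1) : IsProbabilityMeasure (coin p) := by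
  refine ⟨?_⟩
  simp only [coin, Measure.add_apply, Measure.smul_apply, measure_univ, smul_eq_mul, mul_one]
  rw [← ENNReal.ofReal_add (by linarith) h0.le]
  simp

/-- The measure `ν`. -/
noncomputable def nuM {Δ : Type*} [Group Δ] (Γ : Subgroup Δ) (N : Subgroup Γ) (p : ℝ)
    [IsProbabilityMeasure (coin p)] : Measure (Subgroup Δ) :=
  (Measure.infinitePi (fun _ : Δ ⧸ Γ => coin p)).map (phi Γ N)

/-- The measure `θ`. -/
noncomputable def thetaM {Δ : Type*} [Group Δ] (Γ : Subgroup Δ) (N : Subgroup Γ) (p : ℝ) :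
    Measure (Subgroup Γ) :=
  (coin p).map (fun y : Bool => if y = true then N else ⊤)

section
variable {Δ : Type*} [Group Δ] [Countable Δ] (Γ : Subgroup Δ) (N : Subgroup Γ) (p : ℝ)
    [IsProbabilityMeasure (coin p)]

lemma mp_phi : MeasurePreserving (phi Γ N) (Measure.infinitePi (fun _ : Δ ⧸ Γ => coin p))
    (nuM Γ N p) := ⟨measurable_phi Γ N, rfl⟩

lemma nuM_prob : IsProbabilityMeasure (nuM Γ N p) :=
  Measure.isProbabilityMeasure_map (measurable_phi Γ N).aemeasurable

lemma thetaM_isIRS [hN : N.Normal] : IsIRS (thetaM Γ N p) := by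
  have hm : Measurable (fun y : Bool => if y = true then N else ⊤) := measurable_of_countable _
  refine ⟨Measure.isProbabilityMeasure_map hm.aemeasurable, fun g => ?_⟩
  unfold thetaM
  rw [Measure.map_map (measurable_conjSub g) hm]
  congr 1
  funext y
  cases y
  · ext x
    simp [mem_conjSub]
  · ext x
    simp only [Function.comp, if_true, mem_conjSub]
    constructor
    · intro hx
      have := hN.conj_mem _ hx g
      simpa [mul_assoc] using this
    · intro hx
      have := hN.conj_mem _ hx g⁻¹
      simpa [mul_assoc] using this

lemma nuM_isIRS : IsIRS (nuM Γ N p) := by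
  refine ⟨nuM_prob Γ N p, fun g => ?_⟩
  unfold nuM
  rw [Measure.map_map (measurable_conjSub g) (measurable_phi Γ N)]
  have h : conjSub g ∘ phi Γ N = phi Γ N ∘ (fun A q => A ((MulAction.toPerm g⁻¹ : _ ≃ _) q)) := by
    funext A
    exact phi_equivariant Γ N A g
  have hp := mp_perm (coin p) (MulAction.toPerm g⁻¹ : (Δ ⧸ Γ) ≃ (Δ ⧸ Γ))
  rw [h, ← Measure.map_map (measurable_phi Γ N) hp.measurable, hp.map_eq]

lemma nuM_weaklyMixing (hinf : Infinite (Δ ⧸ Γ)) :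
    WeaklyMixingAct (fun (δ : Δ) (H : Subgroup Δ) => conjSub δ H) (nuM Γ N p) := by
  intro s hs hinv
  have := nuM_prob Γ N p
  have hmp : MeasurePreserving
      (fun x : (Δ ⧸ Γ) ⊕ (Δ ⧸ Γ) → Bool =>
        (phi Γ N (fun i => x (Sum.inl i)), phi Γ N (fun i => x (Sum.inr i))))
      (Measure.infinitePi (fun _ => coin p)) ((nuM Γ N p).prod (nuM Γ N p)) :=
    ((mp_phi Γ N p).prod (mp_phi Γ N p)).comp (mp_sum (coin p))
  rw [← hmp.measure_preimage hs.nullMeasurableSet,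
    ← hmp.measure_preimage hs.compl.nullMeasurableSet]
  have horb0 : ∀ q : Δ ⧸ Γ, (MulAction.orbit Δ q) = Set.univ := fun q =>
    MulAction.orbit_eq_univ Δ q
  have horb : ∀ j : (Δ ⧸ Γ) ⊕ (Δ ⧸ Γ), (MulAction.orbit Δ j).Infinite := by
    rintro (q | q)
    · have : Sum.inl '' (MulAction.orbit Δ q) ⊆ MulAction.orbit Δ (Sum.inl q : (Δ ⧸ Γ) ⊕ (Δ ⧸ Γ)) := by
        rintro _ ⟨_, ⟨g, rfl⟩, rfl⟩
        exact ⟨g, rfl⟩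
      refine Set.Infinite.mono this (Set.Infinite.image Sum.inl_injective.injOn ?_)
      rw [horb0]; exact Set.infinite_univ
    · have : Sum.inr '' (MulAction.orbit Δ q) ⊆ MulAction.orbit Δ (Sum.inr q : (Δ ⧸ Γ) ⊕ (Δ ⧸ Γ)) := by
        rintro _ ⟨_, ⟨g, rfl⟩, rfl⟩
        exact ⟨g, rfl⟩
      refine Set.Infinite.mono this (Set.Infinite.image Sum.inr_injective.injOn ?_)
      rw [horb0]; exact Set.infinite_univ
  refine bernoulli_ergodic (G := Δ) (coin p) horb _ (hmp.measurable hs) fun g => ?_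
  conv_rhs => rw [← hinv g⁻¹]
  ext x
  simp only [Set.mem_preimage, phi_equivariant, inv_inv, Sum.smul_inl, Sum.smul_inr]

lemma map_conj_mem [hN : N.Normal] {x d e : Δ}
    (h : (QuotientGroup.mk d : Δ ⧸ Γ) = QuotientGroup.mk e)
    (hx : d⁻¹ * x * d ∈ N.map Γ.subtype) : e⁻¹ * x * e ∈ N.map Γ.subtype := by
  rw [QuotientGroup.eq] at h
  obtain ⟨n, hn, hn'⟩ := hx
  refine ⟨⟨_, h⟩⁻¹ * n * ⟨_, h⟩, ?_, ?_⟩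
  · have := hN.conj_mem n hn ⟨_, h⟩⁻¹
    simpa using this
  · simp only [Subgroup.subtype_apply] at hn'
    simp [hn', mul_assoc]

lemma nuM_NSet (F : Set Δ) (hF : F ⊆ Γ.normalCore) :
    phi Γ N ⁻¹' (NSet F) = Set.univ.pi (fun q : Δ ⧸ Γ => {y : Bool | y = true →
      ∀ d : Δ, QuotientGroup.mk d = q → ∀ f ∈ F, d⁻¹ * f * d ∈ N.map Γ.subtype}) := by
  ext A
  simp only [Set.mem_preimage, NSet, Set.mem_ofPred_eq, Set.mem_pi, Set.mem_univ, forall_true_left,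
    Set.subset_def, SetLike.mem_coe, mem_phi]
  constructor
  · rintro h q hq d rfl f hf
    exact (h f hf).2 d hq
  · intro h f hf
    exact ⟨hF hf, fun d hd => h _ hd d rfl f hf⟩

lemma nuM_cind [hN : N.Normal] (T : Set Δ) (hT : IsLeftTransversal Γ T) :
    CindSpec Γ T (thetaM Γ N p) (nuM Γ N p) := by
  intro F
  constructor
  · intro hF
    have : Countable (Δ ⧸ Γ) := QuotientGroup.mk_surjective.countable
    rw [← (mp_phi Γ N p).measure_preimage (measurableSet_NSet _).nullMeasurableSet]
    convert measure_empty (μ := Measure.infinitePi (fun _ : Δ ⧸ Γ => coin p))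
    rw [Set.eq_empty_iff_forall_notMem]
    intro A hA
    exact hF fun f hf => (hA hf).1
  · intro hF
    have : Countable (Δ ⧸ Γ) := QuotientGroup.mk_surjective.countable
    rw [← (mp_phi Γ N p).measure_preimage (measurableSet_NSet _).nullMeasurableSet,
      nuM_NSet Γ N _ hF, Measure.infinitePi_pi_univ _ (fun _ => MeasurableSet.of_discrete)]
    have hbij : Function.Bijective (fun t : T => (QuotientGroup.mk (t : Δ) : Δ ⧸ Γ)) := by
      constructor
      · rintro ⟨a, ha⟩ ⟨b, hb⟩ hab
        obtain ⟨c, hc, hu⟩ := hT a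
        have h1 := hu a ⟨ha, by simp⟩
        have h2 := hu b ⟨hb, QuotientGroup.eq.1 hab⟩
        exact Subtype.ext (h1.trans h2.symm)
      · intro q
        induction q using QuotientGroup.induction_on with
        | H d =>
          obtain ⟨c, ⟨hc, hdc⟩, -⟩ := hT d
          exact ⟨⟨c, hc⟩, (QuotientGroup.eq.2 hdc).symm⟩
    rw [← (Equiv.ofBijective _ hbij).tprod_eq]
    refine tprod_congr fun t => ?_
    have hm : Measurable (fun y : Bool => if y = true then N else ⊤) := measurable_of_countable _
    have hms : MeasurableSet (NpullSet Γ
        ((fun d => (t : Δ)⁻¹ * d * (t : Δ)) '' (F : Set Δ))) := by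
      have : NpullSet Γ ((fun d => (t : Δ)⁻¹ * d * (t : Δ)) '' (F : Set Δ)) =
        NSet {x : Γ | (x : Δ) ∈ ((fun d => (t : Δ)⁻¹ * d * (t : Δ)) '' (F : Set Δ))} := rfl
      rw [this]
      exact measurableSet_NSet _
    unfold thetaM
    rw [Measure.map_apply hm hms]
    congr 1
    ext y
    simp only [Set.mem_ofPred_eq, Set.mem_preimage, NpullSet, Equiv.ofBijective_apply]
    cases y
    · simp
    · simp only [forall_true_left, if_true]
      constructor
      · rintro h x ⟨f, hf, hfx⟩
        obtain ⟨n, hn, hn'⟩ := h t rfl f hf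
        have : n = x := Subtype.ext (hn'.trans hfx)
        exact this ▸ hn
      · intro h d hd f hf
        refine map_conj_mem Γ N hd.symm ?_
        have hmem : (t : Δ)⁻¹ * f * t ∈ Γ := by
          have := Γ.normalCore_le (Γ.normalCore_normal.conj_mem _ (hF hf) (t : Δ)⁻¹)
          simpa using this
        exact ⟨⟨_, hmem⟩, h ⟨_, hmem⟩ ⟨f, hf, rfl⟩, rfl⟩

lemma nuM_value [hN : N.Normal] (h0 : 0 < p) (γ₀ : Δ) (hγ₀ : γ₀ ∈ Γ.normalCore)
    (B : Finset (Δ ⧸ Γ))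
    (hB : ∀ d : Δ, (QuotientGroup.mk d : Δ ⧸ Γ) ∈ B ↔ ¬ d⁻¹ * γ₀ * d ∈ N.map Γ.subtype) :
    nuM Γ N p (NSet {γ₀}) = ENNReal.ofReal (p ^ B.card) := by
  rw [← (mp_phi Γ N p).measure_preimage (measurableSet_NSet _).nullMeasurableSet]
  have : phi Γ N ⁻¹' (NSet {γ₀}) = (B : Set (Δ ⧸ Γ)).pi (fun _ => {false}) := by
    ext A
    simp only [Set.mem_preimage, NSet, Set.mem_ofPred_eq, Set.mem_pi, Set.singleton_subset_iff,
      SetLike.mem_coe, mem_phi, Set.mem_singleton_iff]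
    constructor
    · rintro ⟨-, h⟩ q hq
      induction q using QuotientGroup.induction_on with
      | H d =>
        by_contra hA
        exact (hB d).1 hq (h d (by simpa using hA))
    · intro h
      refine ⟨hγ₀, fun d hd => ?_⟩
      by_contra hc
      have := h _ ((hB d).2 hc)
      simp [hd] at this
  rw [this, Measure.infinitePi_pi _ (fun _ _ => MeasurableSet.of_discrete)]
  simp [coin, ENNReal.ofReal_pow h0.le]

end

lemma nonatomic_of_wm {Δ : Type*} [Group Δ] [Countable Δ] (ν : Measure (Subgroup Δ))
    [IsProbabilityMeasure ν]
    (h : WeaklyMixingAct (fun (δ : Δ) (H : Subgroup Δ) => conjSub δ H) ν)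
    (E : Set (Subgroup Δ)) (hE : MeasurableSet E) (h0 : ν E ≠ 0) (h1 : ν E ≠ 1) :
    NonAtomicMeasure ν := by
  intro x
  have hD : MeasurableSet {q : Subgroup Δ × Subgroup Δ | q.1 = q.2} := by
    have : {q : Subgroup Δ × Subgroup Δ | q.1 = q.2} =
        ⋂ g : Δ, {q : Subgroup Δ × Subgroup Δ | g ∈ q.1 ↔ g ∈ q.2} := by
      ext q
      simp [SetLike.ext_iff]
    rw [this]
    refine .iInter fun g => ?_
    have a1 : MeasurableSet {q : Subgroup Δ × Subgroup Δ | g ∈ q.1} :=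
      measurable_fst (measurableSet_mem g)
    have a2 : MeasurableSet {q : Subgroup Δ × Subgroup Δ | g ∈ q.2} :=
      measurable_snd (measurableSet_mem g)
    exact a1.iff a2
  have hi := h _ hD (fun g => by
    ext q
    simp only [Set.mem_preimage, Set.mem_ofPred_eq]
    constructor
    · intro hq
      ext x
      have := SetLike.ext_iff.1 hq (g * x * g⁻¹)
      simpa [mem_conjSub, mul_assoc] using this
    · intro hq
      rw [hq])
  rcases hi with hi | hi
  · have : ν.prod ν ({x} ×ˢ {x}) = 0 := by
      refine measure_mono_null ?_ hi
      rintro ⟨a, b⟩ ⟨ha, hb⟩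
      exact ha.trans hb.symm
    rw [Measure.prod_prod] at this
    simpa using this
  · exfalso
    have : ν.prod ν (E ×ˢ Eᶜ) = 0 := by
      refine measure_mono_null ?_ hi
      rintro ⟨a, b⟩ ⟨ha, hb⟩ hab
      exact hb ((show a = b from hab) ▸ ha)
    rw [Measure.prod_prod, mul_eq_zero, prob_compl_eq_zero_iff hE] at this
    tauto

/-- The sufficient criterion (Proposition 1.5 / 8.1, (1) ⟹ (2)): if `[Δ : Γ] = ∞` and there
are a transversal `{t_i : i ∈ ℕ}` for `Δ/Γ` and `γ₀ ∈ core_Δ(Γ)` such that the chain of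
normal subgroups `Γ̄_k = ⟨⟨t_i⁻¹γ₀t_i : i ≥ k⟩⟩_Γ` is not constant, then there is a
continuum-size family `(θ_r)_{r∈ℝ}` of IRSs of `Γ` whose co-inductions to `Δ` are pairwise
distinct, non-atomic and weakly mixing. -/
theorem criterion_continuum_many_IRS {Δ : Type*} [Group Δ] [Countable Δ] (Γ : Subgroup Δ)
    (hinf : Infinite (Δ ⧸ Γ))
    (t : ℕ → Δ) (hT : IsLeftTransversal Γ (Set.range t))
    (γ₀ : Δ) (hγ₀ : γ₀ ∈ Γ.normalCore)
    (hne : ∃ k l : ℕ,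
      Subgroup.normalClosure {x : ↥Γ | ∃ i : ℕ, k ≤ i ∧ (x : Δ) = (t i)⁻¹ * γ₀ * t i} ≠
      Subgroup.normalClosure {x : ↥Γ | ∃ i : ℕ, l ≤ i ∧ (x : Δ) = (t i)⁻¹ * γ₀ * t i}) :
    ∃ (θ : ℝ → Measure (Subgroup ↥Γ)) (ν : ℝ → Measure (Subgroup Δ)),
      (∀ r : ℝ, IsIRS (θ r)) ∧
      (∀ r : ℝ, IsIRS (ν r) ∧ CindSpec Γ (Set.range t) (θ r) (ν r)) ∧
      (∀ r : ℝ, NonAtomicMeasure (ν r)) ∧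
      (∀ r : ℝ, WeaklyMixingAct (fun (δ : Δ) (H : Subgroup Δ) => conjSub δ H) (ν r)) ∧
      Function.Injective ν := by
  classical
  have hconj : ∀ i, (t i)⁻¹ * γ₀ * t i ∈ Γ := fun i => by
    have := Γ.normalCore_le (Γ.normalCore_normal.conj_mem _ hγ₀ (t i)⁻¹)
    simpa using this
  have hex : ∃ k i : ℕ, (⟨_, hconj i⟩ : Γ) ∉
      Subgroup.normalClosure {x : ↥Γ | ∃ i : ℕ, k ≤ i ∧ (x : Δ) = (t i)⁻¹ * γ₀ * t i} := by
    by_contra! hall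
    obtain ⟨k, l, hkl⟩ := hne
    have hle : ∀ k l : ℕ,
        Subgroup.normalClosure {x : ↥Γ | ∃ i : ℕ, k ≤ i ∧ (x : Δ) = (t i)⁻¹ * γ₀ * t i} ≤
        Subgroup.normalClosure {x : ↥Γ | ∃ i : ℕ, l ≤ i ∧ (x : Δ) = (t i)⁻¹ * γ₀ * t i} := by
      intro k l
      refine Subgroup.normalClosure_le_normal ?_
      rintro x ⟨i, -, hi⟩
      have : x = ⟨_, hconj i⟩ := Subtype.ext hi
      rw [this]
      exact hall l i
    exact hkl (le_antisymm (hle _ _) (hle _ _))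
  obtain ⟨k, i₀, hi₀⟩ := hex
  set N := Subgroup.normalClosure
    {x : ↥Γ | ∃ i : ℕ, k ≤ i ∧ (x : Δ) = (t i)⁻¹ * γ₀ * t i} with hN
  have hNn : N.Normal := Subgroup.normalClosure_normal
  let B : Finset (Δ ⧸ Γ) := ((Finset.range k).image (fun i => (QuotientGroup.mk (t i) : Δ ⧸ Γ))).filter
    (fun q => ∃ d : Δ, QuotientGroup.mk d = q ∧ ¬ d⁻¹ * γ₀ * d ∈ N.map Γ.subtype)
  have hB : ∀ d : Δ, (QuotientGroup.mk d : Δ ⧸ Γ) ∈ B ↔ ¬ d⁻¹ * γ₀ * d ∈ N.map Γ.subtype := by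
    intro d
    simp only [B, Finset.mem_filter, Finset.mem_image, Finset.mem_range]
    constructor
    · rintro ⟨-, e, he, hne⟩ hd
      exact hne (map_conj_mem Γ N he.symm hd)
    · intro hd
      refine ⟨?_, d, rfl, hd⟩
      obtain ⟨c, ⟨⟨i, rfl⟩, hdc⟩, -⟩ := hT d
      have hq : (QuotientGroup.mk d : Δ ⧸ Γ) = QuotientGroup.mk (t i) := QuotientGroup.eq.2 hdc
      refine ⟨i, ?_, hq.symm⟩
      by_contra hik
      refine hd (map_conj_mem Γ N hq.symm ?_)
      exact ⟨⟨_, hconj i⟩, Subgroup.subset_normalClosure ⟨i, not_lt.1 hik, rfl⟩, rfl⟩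
  have hB0 : B.card ≠ 0 := by
    rw [Finset.card_ne_zero]
    refine ⟨QuotientGroup.mk (t i₀), (hB _).2 ?_⟩
    rintro ⟨n, hn, hn'⟩
    have : n = ⟨_, hconj i₀⟩ := Subtype.ext hn'
    exact hi₀ (this ▸ hn)
  have hp0 := fun r : ℝ => Real.sigmoid_pos r
  have hp1 := fun r : ℝ => Real.sigmoid_lt_one r
  have hprob : ∀ r : ℝ, IsProbabilityMeasure (coin (Real.sigmoid r)) :=
    fun r => coin_prob (hp0 r) (hp1 r)
  have hval := fun r : ℝ => nuM_value Γ N (Real.sigmoid r) (hp0 r) γ₀ hγ₀ B hB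
  refine ⟨fun r => thetaM Γ N (Real.sigmoid r), fun r => nuM Γ N (Real.sigmoid r),
    fun r => thetaM_isIRS Γ N _, fun r => ⟨nuM_isIRS Γ N _, nuM_cind Γ N _ _ hT⟩, fun r => ?_,
    fun r => nuM_weaklyMixing Γ N _ hinf, fun r r' hrr => ?_⟩
  · have := nuM_prob Γ N (Real.sigmoid r)
    refine nonatomic_of_wm _ (nuM_weaklyMixing Γ N _ hinf) (NSet {γ₀}) (measurableSet_NSet _) ?_ ?_
    · rw [hval r]
      simpa using pow_pos (hp0 r) _
    · rw [hval r, Ne, ENNReal.ofReal_eq_one]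
      exact (pow_lt_one₀ (hp0 r).le (hp1 r) hB0).ne
  · have h1 := hval r
    have h2 := hval r'
    have h3 : nuM Γ N (Real.sigmoid r) = nuM Γ N (Real.sigmoid r') := hrr
    rw [h3, h2, ENNReal.ofReal_eq_ofReal_iff (pow_nonneg (hp0 _).le _)
      (pow_nonneg (hp0 _).le _)] at h1
    have h4 := (pow_left_inj₀ (hp0 r').le (hp0 r).le hB0).1 h1
    exact (Real.sigmoid_injective h4).symm

end IRSPaper
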